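/- arXiv:1811.09241 — 2 statements merged into one kernel-verified Lean document; each statement's English description precedes it below -/
import Mathlib

section
/- For every α > 0 there exists a constant c = c(α) such that for all a, b ∈ ℝ^N (N ∈ ℕ) the two-sided inequality (1/c)·|b^⟦α⟧ − a^⟦α⟧| ≤ (|a| + |b|)^{α−1}·|b − a| ≤ c·|b^⟦α⟧ − a^⟦α⟧| holds. -/
/-!
Both sides are symmetric in `a, b`, so assume `s = ‖a‖ ≤ t = ‖b‖` with `0 < t`. The sum `s + t` lies
in `[t, 2t]`, so `(s + t)^(α-1)` may be replaced by `t^(α-1)` at the cost of a factor `2^|α-1|`.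
The identity `b^⟦α⟧ - a^⟦α⟧ = t^(α-1) (b - a) + (t^(α-1) - s^(α-1)) a` reduces both inequalities to
an estimate of the last term, whose norm is
`|(t^α - s^α) - t^(α-1) (t - s)|`. By Bernoulli's inequality (`rpow_sub_comparable`) the quantities
`t^α - s^α` and `t^(α-1) (t - s)` are comparable; the first is at most `‖b^⟦α⟧ - a^⟦α⟧‖` and the
second at most `t^(α-1) ‖b - a‖` by the reverse triangle inequality.
-/

noncomputable section

/-- The signed power `v^⟦α⟧ = |v|^{α-1} v` of a vector (interpreted as `0` for `v = 0`). -/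
def vpow {N : ℕ} (α : ℝ) (v : EuclideanSpace ℝ (Fin N)) : EuclideanSpace ℝ (Fin N) :=
  ‖v‖ ^ (α - 1) • v

/-- Bernoulli's inequality on `[0, 1]`, in a form covering `α ≤ 1` and `1 ≤ α` simultaneously. -/
lemma one_sub_rpow_comparable {α r : ℝ} (hα : 0 < α) (hr : 0 ≤ r) (hr1 : r ≤ 1) :
    1 - r ≤ (1 + α + 1 / α) * (1 - r ^ α) ∧ 1 - r ^ α ≤ (1 + α + 1 / α) * (1 - r) := by
  have hi : 0 < 1 / α := by positivity
  have hαi : 1 / α * α = 1 := by field_simp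
  have h1 : r ^ α ≤ 1 := Real.rpow_le_one hr hr1 hα.le
  rcases le_total α 1 with h | h
  · have hB := rpow_one_add_le_one_add_mul_self (s := r - 1) (by linarith) hα.le h
    have hm : r ≤ r ^ α := by
      simpa using Real.rpow_le_rpow_of_exponent_ge' hr hr1 hα.le h
    rw [add_sub_cancel] at hB
    constructor
    · have h2 : 1 / α * (α * (1 - r)) ≤ 1 / α * (1 - r ^ α) :=
        mul_le_mul_of_nonneg_left (by linarith) hi.le
      rw [← mul_assoc, hαi] at h2
      nlinarith
    · nlinarith
  · have hB := one_add_mul_self_le_rpow_one_add (s := r - 1) (by linarith) h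
    have hm : r ^ α ≤ r := by
      simpa using Real.rpow_le_rpow_of_exponent_ge' hr hr1 zero_le_one h
    rw [add_sub_cancel] at hB
    constructor
    · nlinarith
    · nlinarith

lemma rpow_sub_comparable {α s t : ℝ} (hα : 0 < α) (hs : 0 ≤ s) (hst : s ≤ t) (ht : 0 < t) :
    t ^ (α - 1) * (t - s) ≤ (1 + α + 1 / α) * (t ^ α - s ^ α) ∧
      t ^ α - s ^ α ≤ (1 + α + 1 / α) * (t ^ (α - 1) * (t - s)) := by
  obtain ⟨h1, h2⟩ := one_sub_rpow_comparable (r := s / t) hα (by positivity)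
    ((div_le_one ht).2 hst)
  have hT : t ^ (α - 1) * t = t ^ α := by
    rw [← Real.rpow_add_one ht.ne', sub_add_cancel]
  have hpos : 0 < t ^ α := Real.rpow_pos_of_pos ht _
  have e1 : t ^ (α - 1) * (t - s) = t ^ α * (1 - s / t) := by
    rw [← hT]; field_simp
  have e2 : t ^ α - s ^ α = t ^ α * (1 - (s / t) ^ α) := by
    rw [Real.div_rpow hs ht.le]; field_simp
  rw [e1, e2]
  constructor <;> nlinarith

/-- `(s + t)^β` and `t^β` are comparable, since `t ≤ s + t ≤ 2t`; the exponent may be negative. -/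
lemma add_rpow_comparable (β : ℝ) {s t : ℝ} (hs : 0 ≤ s) (hst : s ≤ t) (ht : 0 < t) :
    (s + t) ^ β ≤ 2 ^ |β| * t ^ β ∧ t ^ β ≤ 2 ^ |β| * (s + t) ^ β := by
  have hQ : (1 : ℝ) ≤ 2 ^ |β| := Real.one_le_rpow one_le_two (abs_nonneg β)
  have hT : 0 < t ^ β := Real.rpow_pos_of_pos ht _
  have hP : 0 < (s + t) ^ β := Real.rpow_pos_of_pos (by linarith) _
  have h2 : (2 * t) ^ β = 2 ^ β * t ^ β := Real.mul_rpow zero_le_two ht.le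
  rcases le_total 0 β with h | h
  · have u1 : t ^ β ≤ (s + t) ^ β := Real.rpow_le_rpow ht.le (by linarith) h
    have u2 : (s + t) ^ β ≤ (2 * t) ^ β := Real.rpow_le_rpow (by linarith) (by linarith) h
    rw [h2] at u2
    rw [abs_of_nonneg h] at hQ ⊢
    exact ⟨u2, by nlinarith⟩
  · have u1 : (s + t) ^ β ≤ t ^ β := Real.rpow_le_rpow_of_nonpos ht (by linarith) h
    have u2 : (2 * t) ^ β ≤ (s + t) ^ β :=
      Real.rpow_le_rpow_of_nonpos (by linarith) (by linarith) h
    rw [h2] at u2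
    have hc : (2 : ℝ) ^ (-β) * 2 ^ β = 1 := by
      rw [← Real.rpow_add two_pos]; simp
    rw [abs_of_nonpos h] at hQ ⊢
    refine ⟨by nlinarith, ?_⟩
    calc t ^ β = 2 ^ (-β) * (2 ^ β * t ^ β) := by rw [← mul_assoc, hc, one_mul]
      _ ≤ _ := mul_le_mul_of_nonneg_left u2 (by positivity)

lemma rpow_sub_one_mul_self {α s : ℝ} (hα : 0 < α) (hs : 0 ≤ s) : s ^ (α - 1) * s = s ^ α := by
  rcases hs.eq_or_lt with rfl | h
  · simp [Real.zero_rpow hα.ne']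
  · rw [← Real.rpow_add_one h.ne', sub_add_cancel]

lemma norm_vpow {N : ℕ} {α : ℝ} (hα : 0 < α) (v : EuclideanSpace ℝ (Fin N)) :
    ‖vpow α v‖ = ‖v‖ ^ α := by
  rw [vpow, norm_smul, Real.norm_of_nonneg (by positivity),
    rpow_sub_one_mul_self hα (norm_nonneg v)]

/-- The two-sided estimate for `‖a‖ ≤ ‖b‖`, with `‖b‖` in place of `‖a‖ + ‖b‖`. -/
lemma vpow_sub_comparable {N : ℕ} {α : ℝ} (hα : 0 < α) {a b : EuclideanSpace ℝ (Fin N)}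
    (hab : ‖a‖ ≤ ‖b‖) (hb : 0 < ‖b‖) :
    ‖vpow α b - vpow α a‖ ≤ (1 + α + 1 / α + 2) * (‖b‖ ^ (α - 1) * ‖b - a‖) ∧
      ‖b‖ ^ (α - 1) * ‖b - a‖ ≤ (1 + α + 1 / α + 2) * ‖vpow α b - vpow α a‖ := by
  obtain ⟨h1, h2⟩ := rpow_sub_comparable hα (norm_nonneg a) hab hb
  have hK : 0 < 1 + α + 1 / α := by positivity
  have hT : 0 < ‖b‖ ^ (α - 1) := Real.rpow_pos_of_pos hb _
  set K := 1 + α + 1 / α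
  set T := ‖b‖ ^ (α - 1) with hTdef
  have hTb : T * ‖b‖ = ‖b‖ ^ α := rpow_sub_one_mul_self hα hb.le
  have hSa := rpow_sub_one_mul_self hα (norm_nonneg a)
  have hnT : ‖T • (b - a)‖ = T * ‖b - a‖ := by rw [norm_smul, Real.norm_of_nonneg hT.le]
  have hsub : T * (‖b‖ - ‖a‖) ≤ T * ‖b - a‖ :=
    mul_le_mul_of_nonneg_left (norm_sub_norm_le b a) hT.le
  have hsub' : ‖b‖ ^ α - ‖a‖ ^ α ≤ ‖vpow α b - vpow α a‖ := by
    rw [← norm_vpow hα, ← norm_vpow hα]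
    exact norm_sub_norm_le _ _
  have hid : vpow α b - vpow α a = T • (b - a) + (T - ‖a‖ ^ (α - 1)) • a := by
    simp only [vpow, ← hTdef]
    module
  have hpow : 0 ≤ ‖b‖ ^ α - ‖a‖ ^ α :=
    sub_nonneg.2 (Real.rpow_le_rpow (norm_nonneg a) hab hα.le)
  have hlin : 0 ≤ T * (‖b‖ - ‖a‖) := mul_nonneg hT.le (sub_nonneg.2 hab)
  have herr : ‖(T - ‖a‖ ^ (α - 1)) • a‖ ≤ (‖b‖ ^ α - ‖a‖ ^ α) + T * (‖b‖ - ‖a‖) := by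
    have e : ‖(T - ‖a‖ ^ (α - 1)) • a‖ = |(‖b‖ ^ α - ‖a‖ ^ α) - T * (‖b‖ - ‖a‖)| := by
      rw [norm_smul, Real.norm_eq_abs, ← abs_of_nonneg (norm_nonneg a), ← abs_mul,
        abs_of_nonneg (norm_nonneg a)]
      congr 1
      linarith
    rw [e, abs_le]
    constructor <;> linarith
  constructor
  · have h3 : ‖vpow α b - vpow α a‖ ≤ T * ‖b - a‖ + ‖(T - ‖a‖ ^ (α - 1)) • a‖ := by
      rw [hid, ← hnT]; exact norm_add_le _ _
    nlinarith
  · have h3 : T * ‖b - a‖ ≤ ‖vpow α b - vpow α a‖ + ‖(T - ‖a‖ ^ (α - 1)) • a‖ := by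
      rw [← hnT, eq_sub_of_add_eq hid.symm]; exact norm_sub_le _ _
    nlinarith

/-- For every `α > 0` there is a constant `c = c(α)` such that for all `a, b ∈ ℝ^N` one has
`(1/c)·|b^⟦α⟧ − a^⟦α⟧| ≤ (|a| + |b|)^{α−1}·|b − a| ≤ c·|b^⟦α⟧ − a^⟦α⟧|`. -/
theorem vpow_two_sided_estimate (α : ℝ) (hα : 0 < α) :
    ∃ c : ℝ, 0 < c ∧ ∀ (N : ℕ) (a b : EuclideanSpace ℝ (Fin N)),
      (1 / c) * ‖vpow α b - vpow α a‖ ≤ (‖a‖ + ‖b‖) ^ (α - 1) * ‖b - a‖ ∧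
      (‖a‖ + ‖b‖) ^ (α - 1) * ‖b - a‖ ≤ c * ‖vpow α b - vpow α a‖ := by
  have hQ : (0 : ℝ) < 2 ^ |α - 1| := by positivity
  have hK : 0 < 1 + α + 1 / α + 2 := by positivity
  have hc : 0 < (2 : ℝ) ^ |α - 1| * (1 + α + 1 / α + 2) := mul_pos hQ hK
  refine ⟨2 ^ |α - 1| * (1 + α + 1 / α + 2), hc, ?_⟩
  intro N a b
  wlog hab : ‖a‖ ≤ ‖b‖ generalizing a b
  · have := this b a (le_of_not_ge hab)
    rwa [add_comm ‖b‖, norm_sub_rev a b, norm_sub_rev (vpow α a)] at this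
  rcases (norm_nonneg b).eq_or_lt with hb | hb
  · have hb0 : b = 0 := norm_eq_zero.1 hb.symm
    have ha0 : a = 0 := norm_le_zero_iff.1 (hb ▸ hab)
    simp [ha0, hb0]
  obtain ⟨h1, h2⟩ := vpow_sub_comparable hα hab hb
  obtain ⟨h3, h4⟩ := add_rpow_comparable (α - 1) (norm_nonneg a) hab hb
  constructor
  · rw [one_div, inv_mul_le_iff₀ hc]
    calc _ ≤ _ := h1
      _ ≤ (1 + α + 1 / α + 2) * ((2 ^ |α - 1| * (‖a‖ + ‖b‖) ^ (α - 1)) * ‖b - a‖) := by gcongr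
      _ = _ := by ring
  · calc _ ≤ (2 ^ |α - 1| * ‖b‖ ^ (α - 1)) * ‖b - a‖ := by gcongr
      _ = 2 ^ |α - 1| * (‖b‖ ^ (α - 1) * ‖b - a‖) := by ring
      _ ≤ 2 ^ |α - 1| * ((1 + α + 1 / α + 2) * ‖vpow α b - vpow α a‖) := by gcongr
      _ = _ := by ring

end
end

section
/- For every α ≥ 1 there exists a constant c = c(α) such that for all a, b ∈ ℝ^N (N ∈ ℕ) one has |b − a|^α ≤ c·|b^⟦α⟧ − a^⟦α⟧|. -/
/-!
Put `p = |a|^(α-1)`, `q = |b|^(α-1)`. Expanding inner products gives the identity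
`⟪q b - p a, b - a⟫ = (p + q)/2 * |b - a|² + (q - p)/2 * (|b|² - |a|²)`.
The last term is nonnegative because `t ↦ t^(α-1)` is monotone, so Cauchy–Schwarz yields
`(p + q) * |b - a| ≤ 2 * |q b - p a|` (`vpow_diff_lower`). On the other hand
`|b - a| ≤ 2 max(|a|, |b|)`, hence `|b - a|^(α-1) ≤ 2^(α-1) * (p + q)` (`norm_sub_rpow_le`).
Multiplying the two bounds gives the claim with `c = 2^α`.
-/

noncomputable section

theorem vpow_diff_lower {N : ℕ} {α : ℝ} (hα : 1 ≤ α) (a b : EuclideanSpace ℝ (Fin N)) :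
    (‖a‖ ^ (α - 1) + ‖b‖ ^ (α - 1)) * ‖b - a‖ ≤ 2 * ‖vpow α b - vpow α a‖ := by
  have hα' : 0 ≤ α - 1 := by linarith
  have hcs := real_inner_le_norm (vpow α b - vpow α a) (b - a)
  have hsq := norm_sub_sq_real b a
  have hmono : 0 ≤ (‖b‖ ^ (α - 1) - ‖a‖ ^ (α - 1)) * (‖b‖ ^ 2 - ‖a‖ ^ 2) := by
    rcases le_total ‖a‖ ‖b‖ with h | h
    · exact mul_nonneg (sub_nonneg.2 (Real.rpow_le_rpow (norm_nonneg _) h hα'))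
        (sub_nonneg.2 (pow_le_pow_left₀ (norm_nonneg _) h 2))
    · exact mul_nonneg_of_nonpos_of_nonpos
        (sub_nonpos.2 (Real.rpow_le_rpow (norm_nonneg _) h hα'))
        (sub_nonpos.2 (pow_le_pow_left₀ (norm_nonneg _) h 2))
  have hinner : inner ℝ (vpow α b - vpow α a) (b - a)
      = (‖a‖ ^ (α - 1) + ‖b‖ ^ (α - 1)) / 2 * ‖b - a‖ ^ 2
        + (‖b‖ ^ (α - 1) - ‖a‖ ^ (α - 1)) * (‖b‖ ^ 2 - ‖a‖ ^ 2) / 2 := by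
    rw [hsq]
    simp only [vpow, inner_sub_left, inner_sub_right, real_inner_smul_left,
      real_inner_self_eq_norm_sq, real_inner_comm b a]
    ring
  rcases (norm_nonneg (b - a)).eq_or_lt with h0 | hpos
  · rw [← h0]
    simp
  · refine le_of_mul_le_mul_right ?_ hpos
    nlinarith

theorem norm_sub_rpow_le {N : ℕ} {β : ℝ} (hβ : 0 ≤ β) (a b : EuclideanSpace ℝ (Fin N)) :
    ‖b - a‖ ^ β ≤ 2 ^ β * (‖a‖ ^ β + ‖b‖ ^ β) := by
  have htri := norm_sub_le b a
  have hp : 0 ≤ ‖a‖ ^ β := by positivity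
  have hq : 0 ≤ ‖b‖ ^ β := by positivity
  rcases le_total ‖a‖ ‖b‖ with h | h
  · calc ‖b - a‖ ^ β ≤ (2 * ‖b‖) ^ β :=
          Real.rpow_le_rpow (norm_nonneg _) (by linarith) hβ
      _ = 2 ^ β * ‖b‖ ^ β := Real.mul_rpow (by norm_num) (norm_nonneg _)
      _ ≤ _ := by gcongr; linarith
  · calc ‖b - a‖ ^ β ≤ (2 * ‖a‖) ^ β :=
          Real.rpow_le_rpow (norm_nonneg _) (by linarith) hβ
      _ = 2 ^ β * ‖a‖ ^ β := Real.mul_rpow (by norm_num) (norm_nonneg _)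
      _ ≤ _ := by gcongr; linarith

/-- For every `α ≥ 1` there is a constant `c = c(α)` such that for all `a, b ∈ ℝ^N` one has
`|b − a|^α ≤ c·|b^⟦α⟧ − a^⟦α⟧|`. -/
theorem vpow_diff_estimate (α : ℝ) (hα : 1 ≤ α) :
    ∃ c : ℝ, 0 < c ∧ ∀ (N : ℕ) (a b : EuclideanSpace ℝ (Fin N)),
      ‖b - a‖ ^ α ≤ c * ‖vpow α b - vpow α a‖ := by
  have hsplit : ∀ x : ℝ, 0 ≤ x → x ^ α = x ^ (α - 1) * x := fun x hx => by
    rcases hx.eq_or_lt with rfl | h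
    · rw [Real.zero_rpow (by linarith), mul_zero]
    · rw [Real.rpow_sub_one h.ne', div_mul_cancel₀ _ h.ne']
  refine ⟨2 ^ α, by positivity, fun N a b => ?_⟩
  calc ‖b - a‖ ^ α = ‖b - a‖ ^ (α - 1) * ‖b - a‖ := hsplit _ (norm_nonneg _)
    _ ≤ 2 ^ (α - 1) * (‖a‖ ^ (α - 1) + ‖b‖ ^ (α - 1)) * ‖b - a‖ := by
        gcongr
        exact norm_sub_rpow_le (by linarith) a b
    _ = 2 ^ (α - 1) * ((‖a‖ ^ (α - 1) + ‖b‖ ^ (α - 1)) * ‖b - a‖) := by ring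
    _ ≤ 2 ^ (α - 1) * (2 * ‖vpow α b - vpow α a‖) :=
        mul_le_mul_of_nonneg_left (vpow_diff_lower hα a b) (by positivity)
    _ = 2 ^ α * ‖vpow α b - vpow α a‖ := by
        rw [hsplit 2 (by norm_num)]
        ring

end
end
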